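/- Let ξ = e^{2πi/3}, Γ₁ = ℤ[ξ] the hexagonal lattice, and Γ₂ = ⟨u, v⟩_ℤ for ℝ-linearly independent u, v ∈ ℤ[ξ]. Suppose none of the following holds: (i) Im_h(u·conj(v)) divides all of N(u), N(v), Re_h(u·conj(v)); (ii) Im_h(u·conj(v)) divides all of Im_h(u²), Im_h(v²), Im_h(uv); (iii) Im_h(u·conj(v)) divides all of Re_h(u²), Re_h(v²), Re_h(uv); (iv) Im_h(u·conj(v)) divides all of Re_h(u²) − Im_h(u²), Re_h(v²) − Im_h(v²), Re_h(uv) − Im_h(uv). Then the point group of the color group H of the coloring of Γ₁ determined by Γ₂ is {identity, z ↦ −z} of order 2 (so the color group is of type p2). -/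

import Mathlib

open Complex

/-- A symmetry `h` of the plane (identified with `ℂ`) is a *color symmetry* of the
coloring of `Γ₁` determined by its subgroup `Γ₂` (each coset of `Γ₂` is one color) if
there is a permutation `σ` of the colors with `c (h ℓ) = σ (c ℓ)` for all `ℓ ∈ Γ₁`. -/
def IsColorSymmetry (Γ₁ Γ₂ : AddSubgroup ℂ) (h : ℂ → ℂ) : Prop :=
  ∃ σ : Equiv.Perm (ℂ ⧸ Γ₂), ∀ ℓ ∈ Γ₁,
    (QuotientAddGroup.mk (h ℓ) : ℂ ⧸ Γ₂) = σ (QuotientAddGroup.mk ℓ)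

/-- The point group `P(H)` of the color group `H` of the coloring of `Γ₁` determined by
`Γ₂`: all isometries of the plane fixing the origin, mapping `Γ₁` onto itself, and
permuting the colors. -/
def pointColorGroup (Γ₁ Γ₂ : AddSubgroup ℂ) : Set (ℂ → ℂ) :=
  {g | Isometry g ∧ Function.Surjective g ∧ g 0 = 0 ∧
    g '' (Γ₁ : Set ℂ) = Γ₁ ∧ IsColorSymmetry Γ₁ Γ₂ g}

/-! Write `Im_h (x + y ξ) = y`. Up to the factor `Im ξ`, `Im_h (z * conj w)` is the standard
symplectic form on `ℂ`, so on `Γ₂ = ⟨u, v⟩` it only takes multiples of `p₂ = Im_h (u * conj v)`.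
The point group of `ℤ[ξ]` consists of the maps `z ↦ ± ε z` and `z ↦ ± ε conj z` with
`ε ∈ {1, ξ, 1 + ξ}`. If such a map preserves `Γ₂`, pairing the image of one generator with any
generator gives the divisibilities in (i) for a rotation of order greater than `2`, and those in
(ii), (iii), (iv) for a reflection with `ε = 1, ξ, 1 + ξ` respectively.
-/

open Set ComplexConjugate

section PrimitiveCubeRoot

variable {ξ : ℂ}

theorem sq_eq_neg_one_sub_of_isPrimitiveRoot_three (hξ : IsPrimitiveRoot ξ 3) :
    ξ ^ 2 = -1 - ξ := by
  have hsum : 1 + ξ + ξ ^ 2 = 0 := by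
    simpa [Finset.sum_range_succ] using hξ.geom_sum_eq_zero (by norm_num)
  linear_combination hsum

theorem conj_eq_neg_one_sub_of_isPrimitiveRoot_three (hξ : IsPrimitiveRoot ξ 3) :
    conj ξ = -1 - ξ := by
  have hinv : ξ⁻¹ = ξ ^ 2 := inv_eq_of_mul_eq_one_right (by rw [← pow_succ', hξ.pow_eq_one])
  rw [← Complex.inv_eq_conj (hξ.norm'_eq_one three_ne_zero), hinv,
    sq_eq_neg_one_sub_of_isPrimitiveRoot_three hξ]

theorem im_ne_zero_of_isPrimitiveRoot_three (hξ : IsPrimitiveRoot ξ 3) : ξ.im ≠ 0 := by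
  intro him
  have hconj : ξ = -1 - ξ :=
    (conj_eq_iff_im.2 him).symm.trans (conj_eq_neg_one_sub_of_isPrimitiveRoot_three hξ)
  have : (3 : ℂ) = 0 := by
    linear_combination 4 * sq_eq_neg_one_sub_of_isPrimitiveRoot_three hξ - (2 * ξ + 1) * hconj
  norm_num at this

theorem conj_add_mul_of_isPrimitiveRoot_three (hξ : IsPrimitiveRoot ξ 3) (x y : ℤ) :
    conj (x + y * ξ) = (x - y : ℤ) + (-y : ℤ) * ξ := by
  simp only [map_add, map_mul, map_intCast, conj_eq_neg_one_sub_of_isPrimitiveRoot_three hξ]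
  push_cast
  ring

theorem normSq_add_mul_of_isPrimitiveRoot_three (hξ : IsPrimitiveRoot ξ 3) (x y : ℤ) :
    normSq (x + y * ξ) = (x ^ 2 - x * y + y ^ 2 : ℤ) := by
  have h : ((normSq (x + y * ξ) : ℝ) : ℂ) = (x ^ 2 - x * y + y ^ 2 : ℤ) := by
    rw [← mul_conj, conj_add_mul_of_isPrimitiveRoot_three hξ]
    push_cast
    linear_combination -(y : ℂ) ^ 2 * sq_eq_neg_one_sub_of_isPrimitiveRoot_three hξ
  exact_mod_cast h

theorem mem_of_sq_sub_mul_add_sq_eq_one {x y : ℤ} (h : x ^ 2 - x * y + y ^ 2 = 1) :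
    (x, y) ∈ ({(1, 0), (-1, 0), (0, 1), (0, -1), (1, 1), (-1, -1)} : Finset (ℤ × ℤ)) := by
  have hx : x ^ 2 ≤ 1 := by linarith [sq_nonneg (x - 2 * y)]
  have hy : y ^ 2 ≤ 1 := by linarith [sq_nonneg (y - 2 * x)]
  obtain ⟨hx₁, hx₂⟩ := abs_le.1 ((sq_le_one_iff_abs_le_one x).1 hx)
  obtain ⟨hy₁, hy₂⟩ := abs_le.1 ((sq_le_one_iff_abs_le_one y).1 hy)
  interval_cases x <;> interval_cases y <;> simp_all

theorem exists_eq_or_eq_neg_of_mem_closure_of_norm_eq_one (hξ : IsPrimitiveRoot ξ 3) {a : ℂ}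
    (ha : a ∈ AddSubgroup.closure {1, ξ}) (hnorm : ‖a‖ = 1) :
    ∃ ε ∈ ({1, ξ, 1 + ξ} : Set ℂ), a = ε ∨ a = -ε := by
  obtain ⟨x, y, rfl⟩ := AddSubgroup.mem_closure_pair.1 ha
  simp only [zsmul_eq_mul, mul_one] at hnorm ⊢
  have hxy : x ^ 2 - x * y + y ^ 2 = 1 := by
    have h := normSq_add_mul_of_isPrimitiveRoot_three hξ x y
    rw [normSq_eq_norm_sq, hnorm, one_pow] at h
    exact_mod_cast h.symm
  have hmem := mem_of_sq_sub_mul_add_sq_eq_one hxy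
  simp only [Finset.mem_insert, Finset.mem_singleton, Prod.mk.injEq] at hmem
  obtain ⟨rfl, rfl⟩ | ⟨rfl, rfl⟩ | ⟨rfl, rfl⟩ | ⟨rfl, rfl⟩ | ⟨rfl, rfl⟩ | ⟨rfl, rfl⟩ := hmem
  · exact ⟨1, by simp, .inl (by simp)⟩
  · exact ⟨1, by simp, .inr (by simp)⟩
  · exact ⟨ξ, by simp, .inl (by simp)⟩
  · exact ⟨ξ, by simp, .inr (by simp)⟩
  · exact ⟨1 + ξ, by simp, .inl (by simp)⟩
  · exact ⟨1 + ξ, by simp, .inr (by push_cast; ring)⟩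

end PrimitiveCubeRoot

section PointColorGroup

variable {Γ₁ Γ₂ : AddSubgroup ℂ} {g : ℂ → ℂ}

theorem IsColorSymmetry.mapsTo (hg : IsColorSymmetry Γ₁ Γ₂ g) (hle : Γ₂ ≤ Γ₁) (h0 : g 0 = 0) :
    MapsTo g Γ₂ Γ₂ := by
  obtain ⟨σ, hσ⟩ := hg
  intro w hw
  have hw₀ : (w : ℂ ⧸ Γ₂) = (0 : ℂ) := (QuotientAddGroup.eq_zero_iff w).2 hw
  have hgw : (g w : ℂ ⧸ Γ₂) = (0 : ℂ) := by
    rw [hσ w (hle hw), hw₀, ← hσ 0 Γ₁.zero_mem, h0]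
  exact (QuotientAddGroup.eq_zero_iff _).1 hgw

theorem id_mem_pointColorGroup (Γ₁ Γ₂ : AddSubgroup ℂ) :
    (fun z ↦ z) ∈ pointColorGroup Γ₁ Γ₂ :=
  ⟨isometry_id, Function.surjective_id, rfl, image_id _, Equiv.refl _, fun _ _ ↦ rfl⟩

theorem neg_mem_pointColorGroup (Γ₁ Γ₂ : AddSubgroup ℂ) :
    (fun z ↦ -z) ∈ pointColorGroup Γ₁ Γ₂ :=
  ⟨(LinearIsometryEquiv.neg ℝ : ℂ ≃ₗᵢ[ℝ] ℂ).isometry, neg_surjective, neg_zero,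
    by simp, Equiv.neg _, fun _ _ ↦ rfl⟩

theorem exists_circle_of_isometry (hg : Isometry g) (h0 : g 0 = 0) :
    ∃ a : Circle, (∀ z, g z = a * z) ∨ ∀ z, g z = a * conj z := by
  let f : ℂ ≃ₗᵢ[ℝ] ℂ :=
    (hg.affineIsometryOfStrictConvexSpace.linearIsometry).toLinearIsometryEquiv rfl
  have hf : ∀ z, f z = g z := fun z ↦ by
    change hg.affineIsometryOfStrictConvexSpace.linearIsometry z = g z
    simpa [h0] using (hg.affineIsometryOfStrictConvexSpace.map_vadd 0 z).symm
  obtain ⟨a, ha | ha⟩ := linear_isometry_complex f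
  · exact ⟨a, .inl fun z ↦ by simp [← hf, ha]⟩
  · exact ⟨a, .inr fun z ↦ by simp [← hf, ha]⟩

theorem exists_mapsTo_of_mem_pointColorGroup {ξ : ℂ} (hξ : IsPrimitiveRoot ξ 3)
    (hle : Γ₂ ≤ AddSubgroup.closure {1, ξ})
    (hg : g ∈ pointColorGroup (AddSubgroup.closure {1, ξ}) Γ₂) :
    ∃ ε ∈ ({1, ξ, 1 + ξ} : Set ℂ),
      MapsTo (ε * ·) Γ₂ Γ₂ ∧ (g = (ε * ·) ∨ g = fun z ↦ -(ε * z)) ∨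
        MapsTo (fun z ↦ ε * conj z) Γ₂ Γ₂ := by
  obtain ⟨hiso, -, h0, himage, hcolor⟩ := hg
  have hmaps : MapsTo g Γ₂ Γ₂ := hcolor.mapsTo hle h0
  obtain ⟨a, ha⟩ := exists_circle_of_isometry hiso h0
  have hone : g 1 = a := by obtain ha | ha := ha <;> simp [ha]
  have hamem : (a : ℂ) ∈ AddSubgroup.closure {1, ξ} := by
    rw [← hone, ← SetLike.mem_coe, ← himage]
    exact mem_image_of_mem g (AddSubgroup.subset_closure (mem_insert _ _))
  obtain ⟨ε, hε, haε⟩ :=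
    exists_eq_or_eq_neg_of_mem_closure_of_norm_eq_one hξ hamem a.norm_coe
  refine ⟨ε, hε, ?_⟩
  obtain hrot | hrefl := ha
  · have hgε : g = (ε * ·) ∨ g = fun z ↦ -(ε * z) :=
      haε.imp (fun h ↦ by ext z; rw [hrot, h]) (fun h ↦ by ext z; rw [hrot, h, neg_mul])
    refine .inl ⟨fun z hz ↦ ?_, hgε⟩
    obtain rfl | rfl := hgε
    · exact hmaps hz
    · exact neg_mem_iff.1 (hmaps hz)
  · refine .inr fun z hz ↦ ?_
    have hgz := hmaps hz
    rw [hrefl] at hgz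
    obtain h | h := haε
    · rwa [h] at hgz
    · rw [h, neg_mul] at hgz
      exact neg_mem_iff.1 hgz

end PointColorGroup

section Divisibility

theorem mapsTo_mul_of_mapsTo_one_add_mul {R : Type*} [Ring R] {Γ : AddSubgroup R} {a : R}
    (hmaps : MapsTo ((1 + a) * ·) (Γ : Set R) Γ) : MapsTo (a * ·) (Γ : Set R) Γ := fun z hz ↦ by
  have hsub : (1 + a) * z - z ∈ Γ := Γ.sub_mem (hmaps hz) hz
  rwa [add_mul, one_mul, add_sub_cancel_left] at hsub

theorem im_mul_conj_mem_zmultiples {u v z w : ℂ} (hz : z ∈ AddSubgroup.closure {u, v})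
    (hw : w ∈ AddSubgroup.closure {u, v}) :
    (z * conj w).im ∈ AddSubgroup.zmultiples (u * conj v).im := by
  obtain ⟨a, b, rfl⟩ := AddSubgroup.mem_closure_pair.1 hz
  obtain ⟨c, d, rfl⟩ := AddSubgroup.mem_closure_pair.1 hw
  refine AddSubgroup.mem_zmultiples_iff.2 ⟨a * d - b * c, ?_⟩
  simp only [mul_im, conj_im, mul_neg, conj_re, smul_add, smul_neg, zsmul_eq_mul, Int.cast_sub,
    Int.cast_mul, map_add, map_mul, map_intCast, add_re, mul_re, intCast_re, intCast_im, zero_mul,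
    sub_zero, add_im, add_zero, neg_zero]
  ring

variable {ξ u v : ℂ} {p₁ p₂ : ℤ}

theorem dvd_of_mul_conj_eq (hξ : ξ.im ≠ 0) (hp : u * conj v = p₁ + p₂ * ξ) {z w : ℂ}
    (hz : z ∈ AddSubgroup.closure {u, v}) (hw : w ∈ AddSubgroup.closure {u, v}) {x y : ℤ}
    (hzw : z * conj w = x + y * ξ) : p₂ ∣ y := by
  obtain ⟨k, hk⟩ := AddSubgroup.mem_zmultiples_iff.1 (im_mul_conj_mem_zmultiples hz hw)
  have him : (k * p₂ : ℝ) * ξ.im = y * ξ.im := by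
    simpa [hp, hzw, mul_assoc] using hk
  exact Dvd.intro_left k (by exact_mod_cast mul_right_cancel₀ hξ him)

theorem dvd_of_mapsTo_mul (hξ : IsPrimitiveRoot ξ 3) {nu nv : ℤ}
    (hp : u * conj v = p₁ + p₂ * ξ) (hnu : u * conj u = nu) (hnv : v * conj v = nv)
    (hmaps : MapsTo (ξ * ·) (AddSubgroup.closure {u, v} : Set ℂ) (AddSubgroup.closure {u, v})) :
    p₂ ∣ nu ∧ p₂ ∣ nv ∧ p₂ ∣ p₁ := by
  have hu : u ∈ AddSubgroup.closure {u, v} := AddSubgroup.subset_closure (by simp)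
  have hv : v ∈ AddSubgroup.closure {u, v} := AddSubgroup.subset_closure (by simp)
  have him := im_ne_zero_of_isPrimitiveRoot_three hξ
  have hsub : p₂ ∣ p₁ - p₂ := by
    refine dvd_of_mul_conj_eq him hp (hmaps hu) hv (x := -p₂) ?_
    push_cast
    linear_combination ξ * hp + p₂ * sq_eq_neg_one_sub_of_isPrimitiveRoot_three hξ
  refine ⟨dvd_of_mul_conj_eq him hp (hmaps hu) hu (x := 0) ?_,
    dvd_of_mul_conj_eq him hp (hmaps hv) hv (x := 0) ?_, dvd_sub_self_right.1 hsub⟩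
  · push_cast
    linear_combination ξ * hnu
  · push_cast
    linear_combination ξ * hnv

theorem dvd_of_mapsTo_mul_conj (hξ : ξ.im ≠ 0) (hp : u * conj v = p₁ + p₂ * ξ) {ε : ℂ}
    (hmaps : MapsTo (fun z ↦ ε * conj z) (AddSubgroup.closure {u, v} : Set ℂ)
      (AddSubgroup.closure {u, v})) {z w : ℂ} (hz : z ∈ AddSubgroup.closure {u, v})
    (hw : w ∈ AddSubgroup.closure {u, v}) {x y : ℤ} (hzw : ε * conj (z * w) = x + y * ξ) :
    p₂ ∣ y :=
  dvd_of_mul_conj_eq hξ hp (hmaps hz) hw (by rw [← hzw, map_mul, mul_assoc])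

theorem dvd_of_mapsTo_conj (hξ : IsPrimitiveRoot ξ 3) (hp : u * conj v = p₁ + p₂ * ξ)
    (hmaps : MapsTo (fun z ↦ conj z) (AddSubgroup.closure {u, v} : Set ℂ)
      (AddSubgroup.closure {u, v})) {z w : ℂ} (hz : z ∈ AddSubgroup.closure {u, v})
    (hw : w ∈ AddSubgroup.closure {u, v}) {x y : ℤ} (hzw : z * w = x + y * ξ) : p₂ ∣ y := by
  have hcoord : conj z * conj w = (x - y : ℤ) + (-y : ℤ) * ξ := by
    rw [← map_mul, hzw, conj_add_mul_of_isPrimitiveRoot_three hξ]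
  exact dvd_neg.1 <|
    dvd_of_mul_conj_eq (im_ne_zero_of_isPrimitiveRoot_three hξ) hp (hmaps hz) hw hcoord

theorem dvd_of_mapsTo_cubeRoot_mul_conj (hξ : IsPrimitiveRoot ξ 3)
    (hp : u * conj v = p₁ + p₂ * ξ)
    (hmaps : MapsTo (fun z ↦ ξ * conj z) (AddSubgroup.closure {u, v} : Set ℂ)
      (AddSubgroup.closure {u, v})) {z w : ℂ} (hz : z ∈ AddSubgroup.closure {u, v})
    (hw : w ∈ AddSubgroup.closure {u, v}) {x y : ℤ} (hzw : z * w = x + y * ξ) : p₂ ∣ x := by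
  have hcoord : ξ * conj (z * w) = y + x * ξ := by
    rw [hzw, conj_add_mul_of_isPrimitiveRoot_three hξ]
    push_cast
    linear_combination -(y : ℂ) * sq_eq_neg_one_sub_of_isPrimitiveRoot_three hξ
  exact dvd_of_mapsTo_mul_conj (im_ne_zero_of_isPrimitiveRoot_three hξ) hp hmaps hz hw hcoord

theorem dvd_sub_of_mapsTo_one_add_mul_conj (hξ : IsPrimitiveRoot ξ 3)
    (hp : u * conj v = p₁ + p₂ * ξ)
    (hmaps : MapsTo (fun z ↦ (1 + ξ) * conj z) (AddSubgroup.closure {u, v} : Set ℂ)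
      (AddSubgroup.closure {u, v})) {z w : ℂ} (hz : z ∈ AddSubgroup.closure {u, v})
    (hw : w ∈ AddSubgroup.closure {u, v}) {x y : ℤ} (hzw : z * w = x + y * ξ) : p₂ ∣ x - y := by
  have hcoord : (1 + ξ) * conj (z * w) = x + (x - y : ℤ) * ξ := by
    rw [hzw, conj_add_mul_of_isPrimitiveRoot_three hξ]
    push_cast
    linear_combination -(y : ℂ) * sq_eq_neg_one_sub_of_isPrimitiveRoot_three hξ
  exact dvd_of_mapsTo_mul_conj (im_ne_zero_of_isPrimitiveRoot_three hξ) hp hmaps hz hw hcoord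

end Divisibility

theorem pointColorGroup_hex_p2_general {ξ u v : ℂ} (hξ : IsPrimitiveRoot ξ 3)
    (hu : u ∈ AddSubgroup.closure {1, ξ}) (hv : v ∈ AddSubgroup.closure {1, ξ})
    {p₁ p₂ nu nv q₁ q₂ r₁ r₂ s₁ s₂ : ℤ}
    (hp : u * conj v = p₁ + p₂ * ξ) (hnu : u * conj u = nu) (hnv : v * conj v = nv)
    (hq : u ^ 2 = q₁ + q₂ * ξ) (hr : v ^ 2 = r₁ + r₂ * ξ) (hs : u * v = s₁ + s₂ * ξ)
    (hrot : ¬(p₂ ∣ nu ∧ p₂ ∣ nv ∧ p₂ ∣ p₁))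
    (hconj : ¬(p₂ ∣ q₂ ∧ p₂ ∣ r₂ ∧ p₂ ∣ s₂))
    (hconj' : ¬(p₂ ∣ q₁ ∧ p₂ ∣ r₁ ∧ p₂ ∣ s₁))
    (hconj'' : ¬(p₂ ∣ q₁ - q₂ ∧ p₂ ∣ r₁ - r₂ ∧ p₂ ∣ s₁ - s₂)) :
    pointColorGroup (AddSubgroup.closure {1, ξ}) (AddSubgroup.closure {u, v}) =
      {fun z ↦ z, fun z ↦ -z} := by
  rw [sq] at hq hr
  have hle : AddSubgroup.closure {u, v} ≤ AddSubgroup.closure {1, ξ} :=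
    (AddSubgroup.closure_le _).2 (pair_subset hu hv)
  have huΓ : u ∈ AddSubgroup.closure {u, v} := AddSubgroup.subset_closure (by simp)
  have hvΓ : v ∈ AddSubgroup.closure {u, v} := AddSubgroup.subset_closure (by simp)
  refine Subset.antisymm (fun g hg ↦ ?_)
    (pair_subset (id_mem_pointColorGroup _ _) (neg_mem_pointColorGroup _ _))
  obtain ⟨ε, rfl | rfl | rfl, ⟨hmaps, hgε⟩ | hmaps⟩ :=
    exists_mapsTo_of_mem_pointColorGroup hξ hle hg
  · simpa using hgε
  · simp only [one_mul] at hmaps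
    have dvd {z w} := dvd_of_mapsTo_conj hξ hp hmaps (z := z) (w := w)
    exact (hconj ⟨dvd huΓ huΓ hq, dvd hvΓ hvΓ hr, dvd huΓ hvΓ hs⟩).elim
  · exact (hrot (dvd_of_mapsTo_mul hξ hp hnu hnv hmaps)).elim
  · have dvd {z w} := dvd_of_mapsTo_cubeRoot_mul_conj hξ hp hmaps (z := z) (w := w)
    exact (hconj' ⟨dvd huΓ huΓ hq, dvd hvΓ hvΓ hr, dvd huΓ hvΓ hs⟩).elim
  · exact (hrot (dvd_of_mapsTo_mul hξ hp hnu hnv (mapsTo_mul_of_mapsTo_one_add_mul hmaps))).elim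
  · have dvd {z w} := dvd_sub_of_mapsTo_one_add_mul_conj hξ hp hmaps (z := z) (w := w)
    exact (hconj'' ⟨dvd huΓ huΓ hq, dvd hvΓ hvΓ hr, dvd huΓ hvΓ hs⟩).elim

/-- Case (f) for the hexagonal lattice `Γ₁ = ℤ[ξ]`, `ξ = e^{2πi/3}`: if none of the
divisibility criteria (a)–(e) holds, then the point group of the color group of the
coloring of `Γ₁` determined by `Γ₂ = ⟨u, v⟩_ℤ` is `{id, z ↦ -z}` of order `2`
(type `p2`). -/
theorem pointColorGroup_hex_p2 (ξ ζ : ℂ)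
    (hξ : ξ = Complex.exp (2 * (Real.pi : ℂ) * I / 3))
    (hζ : ζ = Complex.exp ((Real.pi : ℂ) * I / 3))
    (u v : ℂ) (a₁ a₂ b₁ b₂ : ℤ)
    (hu : u = a₁ + a₂ * ξ) (hv : v = b₁ + b₂ * ξ)
    (hind : LinearIndependent ℝ ![u, v])
    (Γ₁ Γ₂ : AddSubgroup ℂ)
    (hΓ₁ : Γ₁ = AddSubgroup.closure ({1, ξ} : Set ℂ))
    (hΓ₂ : Γ₂ = AddSubgroup.closure ({u, v} : Set ℂ))
    (p₁ p₂ nu nv q₁ q₂ r₁ r₂ s₁ s₂ : ℤ)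
    (hp : u * starRingEnd ℂ v = p₁ + p₂ * ξ)
    (hnu : u * starRingEnd ℂ u = (nu : ℂ))
    (hnv : v * starRingEnd ℂ v = (nv : ℂ))
    (hq : u ^ 2 = q₁ + q₂ * ξ)
    (hr : v ^ 2 = r₁ + r₂ * ξ)
    (hs : u * v = s₁ + s₂ * ξ)
    (h1 : ¬ (p₂ ∣ nu ∧ p₂ ∣ nv ∧ p₂ ∣ p₁))
    (h2 : ¬ (p₂ ∣ q₂ ∧ p₂ ∣ r₂ ∧ p₂ ∣ s₂))
    (h3 : ¬ (p₂ ∣ q₁ ∧ p₂ ∣ r₁ ∧ p₂ ∣ s₁))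
    (h4 : ¬ (p₂ ∣ (q₁ - q₂) ∧ p₂ ∣ (r₁ - r₂) ∧ p₂ ∣ (s₁ - s₂))) :
    pointColorGroup Γ₁ Γ₂ = {fun z => z, fun z => -z} := by
  subst hΓ₁ hΓ₂
  exact pointColorGroup_hex_p2_general (hξ ▸ mod_cast Complex.isPrimitiveRoot_exp 3 three_ne_zero)
    (AddSubgroup.mem_closure_pair.2 ⟨a₁, a₂, by simp [hu]⟩)
    (AddSubgroup.mem_closure_pair.2 ⟨b₁, b₂, by simp [hv]⟩) hp hnu hnv hq hr hs h1 h2 h3 h4
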